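/- Let G be the group presented by generators a, b, c, h and relators [h,a], [h,b], [h,c], a⁴h, b⁴h, c²h, abc, and let H be the group presented by generators a, b, c, h and relators [h,a], [h,b], [h,c], a⁴h³, b⁴h³, c²h, abch. Then FIA(G) = FIA(H): for every positive integer n and every subgroup K of G of index n there is a subgroup L of H of index n with abelianization isomorphic to that of K, and conversely. -/

import Mathlib

/-!
Both presented groups are central extensions, with nil geometry, of the orientation-preserving
wallpaper group `p4` (the `(4, 4, 2)` triangle group) acting on `ℤ[i]` by `z ↦ v + i ^ r z`.
Explicitly, let `Gam e` be the set `ℤ[i] × ℤ` with the product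
`(v, r) (v', r') = (v + i ^ r v', r + r' + 8 e Im (conj v * i ^ r * v'))`, whose kernel of the
action on `ℤ[i]` is the central subgroup `4 ℤ`. The first group is `Gam 1` and the second is
`Gam (-1)` (`exists_equivM`, `exists_equivN`). It then suffices to find, for each subgroup `K` of
`Gam e`, a subgroup `L` of `Gam (-e)` of the same index with the same abelianization
(`Gam.exists_partner`). The index of `K` depends only on its image in the group of motions and on
its intersection with `4 ℤ` (`Gam.index_eq`), so `L` only has to agree with `K` in these two
respects.

If `r` is even for all `(v, r) ∈ K`, then `(v, r) ↦ (v, -r)` is multiplicative on `K`, and `L` is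
the image of `K`, isomorphic to `K` (`Gam.even_case`).

Otherwise `K` contains a quarter turn, whose centre lies in `(1 - i)⁻¹ ℤ[i]`. Conjugation by a
half-integral translation is an automorphism of `Gam e` (`Gam.shift`), so the centre may be taken
to be the origin: `(0, t) ∈ K` with `t` odd. In this case `L` is the same set as `K`
(`Gam.rot_case`). Indeed the products of two elements `(v, r)` and `(v', r')` in `Gam e` and
`Gam (-e)` differ by the central element `16 e Im (conj v * i ^ r * v')`. Composing with suitable
powers of `(0, t)` shows that `K` contains elements which translate by `v` and by `i ^ r v'`, and
that central element is precisely their commutator (`Gam.area_comm`). So `L` is closed under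
multiplication, and the identity map induces inverse homomorphisms between the abelianizations of
`K` and `L`.
-/

namespace ProfinitePaper

namespace Wilkes

/-- Generator `a`. -/
def a : FreeGroup (Fin 4) := FreeGroup.of 0
/-- Generator `b`. -/
def b : FreeGroup (Fin 4) := FreeGroup.of 1
/-- Generator `c`. -/
def c : FreeGroup (Fin 4) := FreeGroup.of 2
/-- Generator `h`. -/
def h : FreeGroup (Fin 4) := FreeGroup.of 3

/-- Relators `[h,a], [h,b], [h,c], a⁴h, b⁴h, c²h, abc` of the first group. -/
def relsM : Set (FreeGroup (Fin 4)) :=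
  {h * a * h⁻¹ * a⁻¹, h * b * h⁻¹ * b⁻¹, h * c * h⁻¹ * c⁻¹,
    a ^ 4 * h, b ^ 4 * h, c ^ 2 * h, a * b * c}

/-- Relators `[h,a], [h,b], [h,c], a⁴h³, b⁴h³, c²h, abch` of the second group. -/
def relsN : Set (FreeGroup (Fin 4)) :=
  {h * a * h⁻¹ * a⁻¹, h * b * h⁻¹ * b⁻¹, h * c * h⁻¹ * c⁻¹,
    a ^ 4 * h ^ 3, b ^ 4 * h ^ 3, c ^ 2 * h, a * b * c * h}

end Wilkes

/-! ### Quarter turns -/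

namespace Nil

/-- Real part of `i ^ r`. -/
def co (r : ℤ) : ℤ := if r % 4 = 0 then 1 else if r % 4 = 2 then -1 else 0

/-- Imaginary part of `i ^ r`. -/
def si (r : ℤ) : ℤ := if r % 4 = 1 then 1 else if r % 4 = 3 then -1 else 0

/-- Real part of `(1 - i ^ r) / (1 - i)`. -/
def ge (r : ℤ) : ℤ := if r % 4 = 1 ∨ r % 4 = 2 then 1 else 0

/-- Imaginary part of `(1 - i ^ r) / (1 - i)`. -/
def gf (r : ℤ) : ℤ := if r % 4 = 2 ∨ r % 4 = 3 then 1 else 0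

lemma quarter_cases (r : ℤ) :
    (r % 4 = 0 ∧ co r = 1 ∧ si r = 0 ∧ ge r = 0 ∧ gf r = 0) ∨
    (r % 4 = 1 ∧ co r = 0 ∧ si r = 1 ∧ ge r = 1 ∧ gf r = 0) ∨
    (r % 4 = 2 ∧ co r = -1 ∧ si r = 0 ∧ ge r = 1 ∧ gf r = 1) ∨
    (r % 4 = 3 ∧ co r = 0 ∧ si r = -1 ∧ ge r = 0 ∧ gf r = 1) := by
  have h : r % 4 = 0 ∨ r % 4 = 1 ∨ r % 4 = 2 ∨ r % 4 = 3 := by omega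
  rcases h with h | h | h | h <;> simp [co, si, ge, gf, h]

lemma quarter_congr {r s : ℤ} (h : r % 4 = s % 4) :
    co r = co s ∧ si r = si s ∧ ge r = ge s ∧ gf r = gf s := by
  simp [co, si, ge, gf, h]

/-- The functions `i ^ r` and `(1 - i ^ r) / (1 - i)` are a character of `ℤ` and a cocycle for
it. -/
lemma co_si_add (r s : ℤ) :
    co (r + s) = co r * co s - si r * si s ∧ si (r + s) = si r * co s + co r * si s ∧
    ge (r + s) = ge r + co r * ge s - si r * gf s ∧
    gf (r + s) = gf r + si r * ge s + co r * gf s := by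
  rcases quarter_cases r with ⟨h, h1, h2, h3, h4⟩ | ⟨h, h1, h2, h3, h4⟩ | ⟨h, h1, h2, h3, h4⟩ |
    ⟨h, h1, h2, h3, h4⟩ <;>
  rcases quarter_cases s with ⟨k, k1, k2, k3, k4⟩ | ⟨k, k1, k2, k3, k4⟩ | ⟨k, k1, k2, k3, k4⟩ |
    ⟨k, k1, k2, k3, k4⟩ <;>
  rcases quarter_cases (r + s) with ⟨l, l1, l2, l3, l4⟩ | ⟨l, l1, l2, l3, l4⟩ |
    ⟨l, l1, l2, l3, l4⟩ | ⟨l, l1, l2, l3, l4⟩ <;>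
  first
  | (exfalso; omega)
  | simp [h1, h2, h3, h4, k1, k2, k3, k4, l1, l2, l3, l4]

lemma quarter_neg (r : ℤ) : co (-r) = co r ∧ si (-r) = -si r := by
  rcases quarter_cases r with ⟨h, h1, h2, h3, h4⟩ | ⟨h, h1, h2, h3, h4⟩ | ⟨h, h1, h2, h3, h4⟩ |
    ⟨h, h1, h2, h3, h4⟩ <;>
  rcases quarter_cases (-r) with ⟨l, l1, l2, l3, l4⟩ | ⟨l, l1, l2, l3, l4⟩ |
    ⟨l, l1, l2, l3, l4⟩ | ⟨l, l1, l2, l3, l4⟩ <;>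
  first
  | (exfalso; omega)
  | simp [h1, h2, l1, l2]

@[simp] lemma co_zero : co 0 = 1 := rfl
@[simp] lemma si_zero : si 0 = 0 := rfl

lemma co_add8 (r e t : ℤ) : co (r + 8 * e * t) = co r := by
  refine (quarter_congr ?_).1
  have : 8 * e * t = 4 * (2 * (e * t)) := by ring
  omega

lemma si_add8 (r e t : ℤ) : si (r + 8 * e * t) = si r := by
  refine (quarter_congr ?_).2.1
  have : 8 * e * t = 4 * (2 * (e * t)) := by ring
  omega

/-! ### The groups `Gam e` -/

/-- The group `Gam e` in coordinates: the set `ℤ[i] × ℤ`, an element `(v, r)` having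
`v = x + i y`, with product
`(v, r) (v', r') = (v + i ^ r v', r + r' + 8 e Im (conj v * i ^ r * v'))`. -/
@[ext] structure Gam (e : ℤ) where
  /-- real part of the translation -/
  x : ℤ
  /-- imaginary part of the translation -/
  y : ℤ
  /-- the integer coordinate: rotation by `i ^ r`, the central direction being `4 ℤ` -/
  r : ℤ

namespace Gam

variable {e : ℤ}

/-- `Im (conj v * i ^ r * v')` for `g = (v, r)` and `k = (v', r')`. -/
def area {d : ℤ} (g : Gam e) (k : Gam d) : ℤ :=
  g.x * (si g.r * k.x + co g.r * k.y) - g.y * (co g.r * k.x - si g.r * k.y)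

instance : Mul (Gam e) :=
  ⟨fun g k => ⟨g.x + (co g.r * k.x - si g.r * k.y), g.y + (si g.r * k.x + co g.r * k.y),
    g.r + k.r + 8 * e * area g k⟩⟩

instance : One (Gam e) := ⟨⟨0, 0, 0⟩⟩

instance : Inv (Gam e) :=
  ⟨fun g => ⟨-(co g.r * g.x + si g.r * g.y), -(co g.r * g.y - si g.r * g.x), -g.r⟩⟩

@[simp] lemma mul_x (g k : Gam e) : (g * k).x = g.x + (co g.r * k.x - si g.r * k.y) := rfl
@[simp] lemma mul_y (g k : Gam e) : (g * k).y = g.y + (si g.r * k.x + co g.r * k.y) := rfl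
@[simp] lemma mul_r (g k : Gam e) : (g * k).r = g.r + k.r + 8 * e * area g k := rfl
@[simp] lemma one_x : (1 : Gam e).x = 0 := rfl
@[simp] lemma one_y : (1 : Gam e).y = 0 := rfl
@[simp] lemma one_r : (1 : Gam e).r = 0 := rfl
@[simp] lemma inv_x (g : Gam e) : g⁻¹.x = -(co g.r * g.x + si g.r * g.y) := rfl
@[simp] lemma inv_y (g : Gam e) : g⁻¹.y = -(co g.r * g.y - si g.r * g.x) := rfl
@[simp] lemma inv_r (g : Gam e) : g⁻¹.r = -g.r := rfl

instance : Group (Gam e) := Group.ofLeftAxioms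
  (by
    intro g k l
    have hc : co (g.r + k.r) = _ := (co_si_add g.r k.r).1
    have hs : si (g.r + k.r) = _ := (co_si_add g.r k.r).2.1
    ext
    · simp only [mul_x, mul_y, mul_r, co_add8, si_add8, hc, hs]; ring
    · simp only [mul_x, mul_y, mul_r, co_add8, si_add8, hc, hs]; ring
    · simp only [mul_x, mul_y, mul_r, area, co_add8, si_add8, hc, hs]
      rcases quarter_cases g.r with ⟨-, h1, h2, -⟩ | ⟨-, h1, h2, -⟩ | ⟨-, h1, h2, -⟩ |
        ⟨-, h1, h2, -⟩ <;> simp only [h1, h2] <;> ring)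
  (by intro g; ext <;> simp [area])
  (by
    intro g
    have hc := (quarter_neg g.r).1
    have hs := (quarter_neg g.r).2
    ext
    · simp only [mul_x, inv_x, inv_r, hc, hs, one_x]; ring
    · simp only [mul_y, inv_y, inv_r, hc, hs, one_y]; ring
    · simp only [mul_r, inv_x, inv_y, inv_r, area, hc, hs, one_r]; ring)

lemma rot_zpow (r s : ℤ) : (⟨0, 0, r⟩ : Gam e) ^ s = ⟨0, 0, s * r⟩ := by
  let f : Multiplicative ℤ →* Gam e :=
    { toFun n := ⟨0, 0, n.toAdd * r⟩
      map_one' := by ext <;> simp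
      map_mul' m n := by ext <;> simp [area]; ring }
  have := f.map_zpow (Multiplicative.ofAdd 1) s
  simpa [f, ← ofAdd_zsmul] using this.symm

lemma trx_zpow (s : ℤ) : (⟨1, 0, 0⟩ : Gam e) ^ s = ⟨s, 0, 0⟩ := by
  let f : Multiplicative ℤ →* Gam e :=
    { toFun n := ⟨n.toAdd, 0, 0⟩
      map_one' := by ext <;> simp
      map_mul' m n := by ext <;> simp [area] }
  have := f.map_zpow (Multiplicative.ofAdd 1) s
  simpa [f, ← ofAdd_zsmul] using this.symm

lemma try_zpow (s : ℤ) : (⟨0, 1, 0⟩ : Gam e) ^ s = ⟨0, s, 0⟩ := by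
  let f : Multiplicative ℤ →* Gam e :=
    { toFun n := ⟨0, n.toAdd, 0⟩
      map_one' := by ext <;> simp
      map_mul' m n := by ext <;> simp [area] }
  have := f.map_zpow (Multiplicative.ofAdd 1) s
  simpa [f, ← ofAdd_zsmul] using this.symm

/-! ### Half-integral translations -/

/-- Conjugation by the translation by `p = P / (1 - i)`, `P = m + i n`. This `p` is only
a half-integral point, so the automorphism need not be inner. -/
def shiftFun (m n : ℤ) (g : Gam e) : Gam e :=
  ⟨g.x + (m * ge g.r - n * gf g.r), g.y + (m * gf g.r + n * ge g.r),
    g.r + 4 * e * (((m - n) * g.y - (m + n) * g.x)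
      - (g.x * (si g.r * (m - n) + co g.r * (m + n))
        - g.y * (co g.r * (m - n) - si g.r * (m + n)))
      - (m * m + n * n) * si g.r)⟩

lemma add4_congr (r e t : ℤ) : (r + 4 * e * t) % 4 = r % 4 := by
  have : 4 * e * t = 4 * (e * t) := by ring
  omega

lemma add8_congr (r e t : ℤ) : (r + 8 * e * t) % 4 = r % 4 := by
  have : 8 * e * t = 4 * (2 * (e * t)) := by ring
  omega

lemma shiftFun_neg (m n : ℤ) (g : Gam e) : shiftFun (-m) (-n) (shiftFun m n g) = g := by
  unfold shiftFun
  obtain ⟨h1, h2, h3, h4⟩ := quarter_congr (add4_congr g.r e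
    (((m - n) * g.y - (m + n) * g.x)
      - (g.x * (si g.r * (m - n) + co g.r * (m + n))
        - g.y * (co g.r * (m - n) - si g.r * (m + n)))
      - (m * m + n * n) * si g.r))
  simp only [h1, h2, h3, h4]
  rcases quarter_cases g.r with ⟨-, k1, k2, k3, k4⟩ | ⟨-, k1, k2, k3, k4⟩ |
    ⟨-, k1, k2, k3, k4⟩ | ⟨-, k1, k2, k3, k4⟩ <;> simp only [k1, k2, k3, k4] <;>
    ext <;> simp only <;> ring

lemma shiftFun_mul (m n : ℤ) (g k : Gam e) :
    shiftFun m n (g * k) = shiftFun m n g * shiftFun m n k := by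
  obtain ⟨h1, h2, h3, h4⟩ := quarter_congr (add4_congr g.r e
    (((m - n) * g.y - (m + n) * g.x)
      - (g.x * (si g.r * (m - n) + co g.r * (m + n))
        - g.y * (co g.r * (m - n) - si g.r * (m + n)))
      - (m * m + n * n) * si g.r))
  obtain ⟨i1, i2, i3, i4⟩ := quarter_congr (add8_congr (g.r + k.r) e (area g k))
  obtain ⟨j1, j2, j3, j4⟩ := co_si_add g.r k.r
  ext <;>
  simp only [shiftFun, mul_x, mul_y, mul_r, i1, i2, i3, i4, j1, j2, j3, j4, h1, h2]
  all_goals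
    try simp only [area, h1, h2]
    rcases quarter_cases g.r with ⟨-, k1, k2, k3, k4⟩ | ⟨-, k1, k2, k3, k4⟩ |
      ⟨-, k1, k2, k3, k4⟩ | ⟨-, k1, k2, k3, k4⟩ <;>
    rcases quarter_cases k.r with ⟨-, l1, l2, l3, l4⟩ | ⟨-, l1, l2, l3, l4⟩ |
      ⟨-, l1, l2, l3, l4⟩ | ⟨-, l1, l2, l3, l4⟩ <;>
    simp only [k1, k2, k3, k4, l1, l2, l3, l4] <;> ring

/-- `shiftFun` as an automorphism. -/
def shift (m n : ℤ) : Gam e ≃* Gam e where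
  toFun := shiftFun m n
  invFun := shiftFun (-m) (-n)
  left_inv := shiftFun_neg m n
  right_inv g := by simpa using shiftFun_neg (-m) (-n) g
  map_mul' := shiftFun_mul m n

/-! ### Motions of the square lattice, and the index -/

/-- The action on `ℤ[i]` by affine motions `z ↦ v + i ^ r z`. -/
def motion (e : ℤ) : Gam e →* Equiv.Perm (ℤ × ℤ) :=
  MonoidHom.toHomPerm
    { toFun g := fun z => (g.x + (co g.r * z.1 - si g.r * z.2), g.y + (si g.r * z.1 + co g.r * z.2))
      map_one' := by
        funext z
        change _ = z
        simp
      map_mul' g k := by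
        funext z
        have hc : co (g.r + k.r) = _ := (co_si_add g.r k.r).1
        have hs : si (g.r + k.r) = _ := (co_si_add g.r k.r).2.1
        simp only [mul_x, mul_y, mul_r, co_add8, si_add8, hc, hs]
        change _ = (g.x + (co g.r * (k.x + (co k.r * z.1 - si k.r * z.2))
            - si g.r * (k.y + (si k.r * z.1 + co k.r * z.2))),
          g.y + (si g.r * (k.x + (co k.r * z.1 - si k.r * z.2))
            + co g.r * (k.y + (si k.r * z.1 + co k.r * z.2))))
        refine Prod.ext ?_ ?_ <;> simp only <;> ring }

lemma motion_apply (g : Gam e) (z : ℤ × ℤ) : motion e g z =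
    (g.x + (co g.r * z.1 - si g.r * z.2), g.y + (si g.r * z.1 + co g.r * z.2)) := rfl

lemma motion_eq_iff {d : ℤ} (g : Gam e) (k : Gam d) :
    motion e g = motion d k ↔ g.x = k.x ∧ g.y = k.y ∧ g.r % 4 = k.r % 4 := by
  constructor
  · intro h
    have h0 := DFunLike.congr_fun h (0, 0)
    have h1 := DFunLike.congr_fun h (1, 0)
    simp only [motion_apply, Prod.mk.injEq, mul_zero, sub_zero, add_zero, mul_one] at h0 h1
    refine ⟨h0.1, h0.2, ?_⟩
    rcases quarter_cases g.r with ⟨h, k1, k2, -⟩ | ⟨h, k1, k2, -⟩ |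
      ⟨h, k1, k2, -⟩ | ⟨h, k1, k2, -⟩ <;>
    rcases quarter_cases k.r with ⟨h', l1, l2, -⟩ | ⟨h', l1, l2, -⟩ |
      ⟨h', l1, l2, -⟩ | ⟨h', l1, l2, -⟩ <;> omega
  · rintro ⟨h1, h2, h3⟩
    obtain ⟨h4, h5, -⟩ := quarter_congr h3
    ext z <;> simp [motion_apply, h1, h2, h4, h5]

/-- The central subgroup `4 ℤ`, as a homomorphism. -/
def cen (e : ℤ) : Multiplicative ℤ →* Gam e where
  toFun n := ⟨0, 0, 4 * n.toAdd⟩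
  map_one' := by ext <;> simp
  map_mul' m n := by ext <;> simp [area]; ring

lemma cen_range : (cen e).range = (motion e).ker := by
  ext g
  rw [MonoidHom.mem_ker, ← map_one (motion e), motion_eq_iff]
  constructor
  · rintro ⟨n, rfl⟩
    simp [cen]
  · rintro ⟨h1, h2, h3⟩
    refine ⟨Multiplicative.ofAdd (g.r / 4), ?_⟩
    ext
    · exact h1.symm
    · exact h2.symm
    · change 4 * (g.r / 4) = g.r
      simp at h3
      omega

lemma cen_comm (n : Multiplicative ℤ) (g : Gam e) : cen e n * g = g * cen e n := by
  obtain ⟨h1, h2, -⟩ := quarter_congr (show (4 * n.toAdd) % 4 = 0 % 4 by omega)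
  ext <;> simp [cen, area, h1, h2]; ring

/-- The index of `K` is the product of the index of its image in the group of motions and of the
index of its intersection with the central subgroup `4 ℤ`. -/
lemma index_eq (K : Subgroup (Gam e)) : K.index =
    (K.comap (cen e)).index * (K.map (motion e)).relIndex (motion e).range := by
  have hN : (cen e).range ≤ Subgroup.normalizer (K : Set (Gam e)) := by
    rintro _ ⟨n, rfl⟩
    rw [Subgroup.mem_normalizer_iff]
    intro g
    rw [cen_comm, mul_inv_cancel_right]
  have h1 : K.relIndex (cen e).range = K.relIndex (K ⊔ (cen e).range) := by
    rw [sup_comm]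
    let _ := Subgroup.normal_subgroupOf_of_le_normalizer hN
    let _ := Subgroup.normal_subgroupOf_sup_of_le_normalizer hN
    exact Nat.card_congr (QuotientGroup.quotientInfEquivProdNormalizerQuotient _ K hN).toEquiv
  rw [Subgroup.index_comap, h1, cen_range, MonoidHom.range_eq_map, Subgroup.relIndex_map_map,
    top_sup_eq, Subgroup.relIndex_top_right, Subgroup.relIndex_mul_index le_sup_left]

lemma motion_range {d : ℤ} : (motion e).range = (motion d).range := by
  have key : ∀ e d : ℤ, (motion e).range ≤ (motion d).range := by
    rintro e d _ ⟨g, rfl⟩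
    exact ⟨⟨g.x, g.y, g.r⟩, (motion_eq_iff _ _).2 ⟨rfl, rfl, rfl⟩⟩
  exact le_antisymm (key e d) (key d e)

lemma index_congr {d : ℤ} {K : Subgroup (Gam e)} {L : Subgroup (Gam d)}
    (h1 : K.comap (cen e) = L.comap (cen d)) (h2 : K.map (motion e) = L.map (motion d)) :
    L.index = K.index := by
  rw [index_eq, index_eq, h1, h2, motion_range]

/-! ### Subgroups containing a quarter turn -/

/-- Two translations commute up to the central element measuring the area they span. -/
lemma translation_comm (x y x' y' s s' : ℤ) (hs : s % 4 = 0) (hs' : s' % 4 = 0) :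
    (⟨0, 0, 16 * e * (x * y' - y * x')⟩ : Gam e)
      = ⟨x, y, s⟩ * ⟨x', y', s'⟩ * (⟨x, y, s⟩ : Gam e)⁻¹ * (⟨x', y', s'⟩ : Gam e)⁻¹ := by
  have key : (⟨0, 0, 16 * e * (x * y' - y * x')⟩ : Gam e) * (⟨x', y', s'⟩ * ⟨x, y, s⟩)
      = ⟨x, y, s⟩ * ⟨x', y', s'⟩ := by
    obtain ⟨h1, h2, -⟩ := quarter_congr (show s % 4 = 0 % 4 by omega)
    obtain ⟨h3, h4, -⟩ := quarter_congr (show s' % 4 = 0 % 4 by omega)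
    obtain ⟨h5, h6, -⟩ := quarter_congr
      (show (16 * e * (x * y' - y * x')) % 4 = 0 % 4 by
        rw [show 16 * e * (x * y' - y * x') = 4 * (4 * e * (x * y' - y * x')) by ring]; omega)
    ext <;> simp only [mul_x, mul_y, mul_r, area, h1, h2, h3, h4, h5, h6, co_zero, si_zero] <;> ring
  rw [← key]
  group

/-- In a subgroup containing a quarter turn about the origin, every area `area g k` is that of two
translations of the subgroup, hence the corresponding central element is a commutator. -/
lemma area_comm (K : Subgroup (Gam e)) {t : ℤ} (ht : t % 2 = 1) (h0 : (⟨0, 0, t⟩ : Gam e) ∈ K)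
    (g k : Gam e) (hg : g ∈ K) (hk : k ∈ K) :
    ∃ p ∈ K, ∃ q ∈ K, (⟨0, 0, 16 * e * area g k⟩ : Gam e) = p * q * p⁻¹ * q⁻¹ := by
  obtain ⟨m, hm⟩ : ∃ m, t * t = 1 + 4 * m := by
    obtain ⟨j, rfl⟩ : ∃ j, t = 2 * j + 1 := ⟨t / 2, by omega⟩
    exact ⟨j * j + j, by ring⟩
  have hp := K.mul_mem hg (K.zpow_mem h0 (-(g.r * t)))
  have hq := K.mul_mem (K.mul_mem (K.zpow_mem h0 (g.r * t)) hk)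
    (K.zpow_mem h0 (-((g.r * t * t + k.r) * t)))
  have hp' : g * (⟨0, 0, t⟩ : Gam e) ^ (-(g.r * t)) = ⟨g.x, g.y, g.r * (-4 * m)⟩ := by
    rw [rot_zpow]
    ext <;> simp [area]
    linear_combination -g.r * hm
  obtain ⟨h1, h2, -⟩ := quarter_congr (show (g.r * t * t) % 4 = g.r % 4 by
    rw [mul_assoc, hm, show g.r * (1 + 4 * m) = g.r + 4 * (g.r * m) by ring]; omega)
  have hq' : (⟨0, 0, t⟩ : Gam e) ^ (g.r * t) * k *
      (⟨0, 0, t⟩ : Gam e) ^ (-((g.r * t * t + k.r) * t)) =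
      ⟨co g.r * k.x - si g.r * k.y, si g.r * k.x + co g.r * k.y,
        (g.r * t * t + k.r) * (-4 * m)⟩ := by
    rw [rot_zpow, rot_zpow]
    ext <;> simp [area, h1, h2]
    linear_combination -(g.r * t * t + k.r) * hm
  rw [hp'] at hp
  rw [hq'] at hq
  refine ⟨_, hp, _, hq, ?_⟩
  rw [← translation_comm]
  · rfl
  · rw [show g.r * (-4 * m) = 4 * (-g.r * m) by ring]; omega
  · rw [show (g.r * t * t + k.r) * (-4 * m) = 4 * (-(g.r * t * t + k.r) * m) by ring]; omega

/-- The identity map of the underlying sets, between groups with different parameters. -/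
def same (d : ℤ) (g : Gam e) : Gam d := ⟨g.x, g.y, g.r⟩

/-- For opposite parameters, the identity of the underlying sets is multiplicative up to the
central elements of `area_comm`. -/
lemma same_mul {d : ℤ} (hd : d = -e) (g k : Gam e) :
    same d g * same d k = ⟨0, 0, 16 * d * area (same d g) (same d k)⟩ * same d (g * k) := by
  obtain ⟨h5, h6, -⟩ := quarter_congr
      (show (16 * d * area (same d g) (same d k)) % 4 = 0 % 4 by
        rw [show 16 * d * area (same d g) (same d k)
          = 4 * (4 * d * area (same d g) (same d k)) by ring]; omega)
  have : area (same d g) (same d k) = area g k := rfl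
  rw [this] at h5 h6 ⊢
  subst hd
  ext
  · simp only [mul_x, h5, h6, co_zero, si_zero]; simp [same]
  · simp only [mul_y, h5, h6, co_zero, si_zero]; simp [same]
  · simp only [mul_r]
    rw [this, show area (⟨0, 0, 16 * -e * area g k⟩ : Gam (-e)) (same (-e) (g * k)) = 0 by
      simp [area]]
    simp only [same, mul_r]
    ring

/-- If `K` and `L` are the same set, with opposite parameters, and contain a quarter turn about the
origin, then the identity map induces a homomorphism of abelianizations. -/
lemma exists_abHom {d : ℤ} (hd : d = -e) {K : Subgroup (Gam e)} {L : Subgroup (Gam d)}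
    (hKL : ∀ g : Gam e, g ∈ K → same d g ∈ L) {t : ℤ} (ht : t % 2 = 1)
    (h0 : (⟨0, 0, t⟩ : Gam e) ∈ K) :
    ∃ f : Abelianization K →* Abelianization L,
      ∀ g : K, f (Abelianization.of g) = Abelianization.of ⟨same d g.1, hKL _ g.2⟩ := by
  -- by `same_mul` and `area_comm`, the identity map is multiplicative modulo commutators of `L`
  let f₀ : K →* Abelianization L :=
    MonoidHom.mk' (fun g => Abelianization.of ⟨same d g.1, hKL _ g.2⟩) (by
      intro g k
      obtain ⟨p, hp, q, hq, hpq⟩ := area_comm L ht (hKL _ h0) (same d g.1) (same d k.1)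
        (hKL _ g.2) (hKL _ k.2)
      have key : (⟨same d g.1, hKL _ g.2⟩ : L) * ⟨same d k.1, hKL _ k.2⟩
          = (⟨p, hp⟩ * ⟨q, hq⟩ * (⟨p, hp⟩ : L)⁻¹ * (⟨q, hq⟩ : L)⁻¹)
            * ⟨same d (g * k).1, hKL _ (g * k).2⟩ := by
        apply Subtype.ext
        have := same_mul hd g.1 k.1
        rw [hpq] at this
        exact this
      have := congrArg Abelianization.of key
      simp only [map_mul, map_inv] at this
      rw [this, mul_inv_cancel_comm, mul_inv_cancel, one_mul])
  exact ⟨Abelianization.lift f₀, fun g => Abelianization.lift_apply_of f₀ g⟩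

/-- A subgroup containing a quarter turn about the origin is partnered with the same underlying
set. -/
lemma rot_case {d : ℤ} (hd : d = -e) (K : Subgroup (Gam e)) {t : ℤ} (ht : t % 2 = 1)
    (h0 : (⟨0, 0, t⟩ : Gam e) ∈ K) :
    ∃ L : Subgroup (Gam d), L.index = K.index ∧
      Nonempty (Abelianization K ≃* Abelianization L) := by
  have hd' : e = -d := by omega
  let L : Subgroup (Gam d) :=
    { carrier := {g | same e g ∈ K}
      one_mem' := K.one_mem
      mul_mem' := by
        intro g k hg hk
        obtain ⟨p, hp, q, hq, hpq⟩ := area_comm K ht h0 _ _ hg hk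
        have h := same_mul hd' g k
        have h1 : (⟨0, 0, 16 * e * area (same e g) (same e k)⟩ : Gam e) ∈ K := by
          rw [hpq]
          exact K.mul_mem (K.mul_mem (K.mul_mem hp hq) (K.inv_mem hp)) (K.inv_mem hq)
        have h2 := K.mul_mem hg hk
        rw [h] at h2
        exact (K.mul_mem_cancel_left h1).1 h2
      inv_mem' := fun {g} hg => K.inv_mem hg }
  obtain ⟨f, hf⟩ := exists_abHom hd (K := K) (L := L) (fun g hg => hg) ht h0
  obtain ⟨f', hf'⟩ := exists_abHom hd' (K := L) (L := K) (fun g hg => hg) ht h0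
  refine ⟨L, index_congr ?_ ?_, ⟨f.toMulEquiv f' ?_ ?_⟩⟩
  · rfl
  · ext z
    constructor
    · rintro ⟨g, hg, rfl⟩
      exact ⟨same d g, hg, rfl⟩
    · rintro ⟨g, hg, rfl⟩
      exact ⟨same e g, hg, rfl⟩
  · apply Abelianization.hom_ext
    ext g
    simp [hf, hf', same]
  · apply Abelianization.hom_ext
    ext g
    simp [hf, hf', same]

/-! ### Subgroups without quarter turns -/

/-- The map `(v, r) ↦ (v, -r)`, a homomorphism between the index-two subgroups `r` even of
the groups with opposite parameters. -/
def flip (d : ℤ) (g : Gam e) : Gam d := ⟨g.x, g.y, -g.r⟩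

lemma even_neg {r : ℤ} (hr : r % 2 = 0) : co (-r) = co r ∧ si (-r) = si r := by
  obtain ⟨h1, h2, -⟩ := quarter_congr (show (-r) % 4 = r % 4 by omega)
  exact ⟨h1, h2⟩

lemma flip_mul {d : ℤ} (hd : d = -e) (g k : Gam e) (hg : g.r % 2 = 0) :
    flip d (g * k) = flip d g * flip d k := by
  obtain ⟨h1, h2⟩ := even_neg hg
  subst hd
  ext <;> simp only [flip, mul_x, mul_y, mul_r, area, h1, h2]
  ring

lemma flip_inv {d : ℤ} (g : Gam e) (hg : g.r % 2 = 0) :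
    flip d g⁻¹ = (flip d g)⁻¹ := by
  obtain ⟨h1, h2⟩ := even_neg hg
  ext <;> simp only [flip, inv_x, inv_y, inv_r, h1, h2]

lemma flip_flip {d : ℤ} (g : Gam e) : flip e (flip d g) = g := by
  ext <;> simp [flip]

/-- A subgroup without quarter turns is partnered with its isomorphic image under `flip`. -/
lemma even_case {d : ℤ} (hd : d = -e) (K : Subgroup (Gam e)) (hK : ∀ g ∈ K, g.r % 2 = 0) :
    ∃ L : Subgroup (Gam d), L.index = K.index ∧
      Nonempty (Abelianization K ≃* Abelianization L) := by
  have hd' : e = -d := by omega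
  have hK' : ∀ g : Gam d, flip e g ∈ K → g.r % 2 = 0 := by
    intro g hg
    have := hK _ hg
    simp only [flip] at this
    omega
  let L : Subgroup (Gam d) :=
    { carrier := {g | flip e g ∈ K}
      one_mem' := K.one_mem
      mul_mem' := by
        intro g k hg hk
        change flip e (g * k) ∈ K
        rw [flip_mul hd' _ _ (hK' g hg)]
        exact K.mul_mem hg hk
      inv_mem' := by
        intro g hg
        change flip e g⁻¹ ∈ K
        rw [flip_inv _ (hK' g hg)]
        exact K.inv_mem hg }
  have hL : ∀ g ∈ K, flip d g ∈ L := by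
    intro g hg
    change flip e (flip d g) ∈ K
    rwa [flip_flip]
  let φ : K ≃* L :=
    { toFun g := ⟨flip d g.1, hL _ g.2⟩
      invFun g := ⟨flip e g.1, g.2⟩
      left_inv g := Subtype.ext (flip_flip g.1)
      right_inv g := Subtype.ext (flip_flip g.1)
      map_mul' g k := Subtype.ext (flip_mul hd g.1 k.1 (hK _ g.2)) }
  refine ⟨L, index_congr ?_ ?_, ⟨φ.abelianizationCongr⟩⟩
  · ext n
    have : flip e (cen d n) = (cen e n)⁻¹ := by
      obtain ⟨h1, h2, -⟩ := quarter_congr (show (4 * n.toAdd) % 4 = 0 % 4 by omega)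
      ext <;> simp [flip, cen]
    change cen e n ∈ K ↔ flip e (cen d n) ∈ K
    rw [this, inv_mem_iff]
  · ext z
    constructor
    · rintro ⟨g, hg, rfl⟩
      refine ⟨flip d g, hL g hg, (motion_eq_iff _ _).2 ⟨rfl, rfl, ?_⟩⟩
      have := hK g hg
      simp only [flip]
      omega
    · rintro ⟨g, hg, rfl⟩
      refine ⟨flip e g, hg, (motion_eq_iff _ _).2 ⟨rfl, rfl, ?_⟩⟩
      have := hK' g hg
      simp only [flip]
      omega

/-! ### Partners of arbitrary subgroups -/

/-- Every subgroup of `Gam e` has a partner in `Gam (-e)` with the same index and isomorphic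
abelianization. -/
theorem exists_partner {d : ℤ} (hd : d = -e) (K : Subgroup (Gam e)) :
    ∃ L : Subgroup (Gam d), L.index = K.index ∧
      Nonempty (Abelianization K ≃* Abelianization L) := by
  by_cases hK : ∀ g ∈ K, g.r % 2 = 0
  · exact even_case hd K hK
  push Not at hK
  obtain ⟨g, hg, hr⟩ : ∃ g ∈ K, g.r % 4 = 1 := by
    obtain ⟨g, hg, hr⟩ := hK
    by_cases h : g.r % 4 = 1
    · exact ⟨g, hg, h⟩
    · exact ⟨g⁻¹, K.inv_mem hg, by rw [inv_r]; omega⟩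
  -- the half-integral translation moving the centre of rotation of `g` to the origin
  let τ : Gam e ≃* Gam e := shift (-g.x) (-g.y)
  have hτ : τ g = ⟨0, 0, (τ g).r⟩ := by
    obtain ⟨-, -, h3, h4⟩ := quarter_congr (show g.r % 4 = 1 % 4 by omega)
    have h5 : ge 1 = 1 := rfl
    have h6 : gf 1 = 0 := rfl
    ext
    · change g.x + (-g.x * ge g.r - -g.y * gf g.r) = 0
      rw [h3, h4, h5, h6]; ring
    · change g.y + (-g.x * gf g.r + -g.y * ge g.r) = 0
      rw [h3, h4, h5, h6]; ring
    · rfl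
  have hodd : (τ g).r % 2 = 1 := by
    have : (τ g).r % 4 = g.r % 4 := add4_congr g.r e _
    omega
  obtain ⟨L, hL, ⟨f⟩⟩ := rot_case hd (K.map τ.toMonoidHom) hodd (hτ ▸ ⟨g, hg, rfl⟩)
  refine ⟨L, hL.trans ?_, ⟨(MulEquiv.abelianizationCongr (τ.subgroupMap K)).trans f⟩⟩
  exact Subgroup.index_map_equiv K τ

/-! ### Homomorphisms out of `Gam e` -/

section Presentation

variable {P : Type*} [Group P]

/-- The element of `P` attached to the translation `a + i b`, when `w`, `W` and `z` stand for the
translations `1`, `i` and half of their commutator. -/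
def trans (w W z : P) (a b : ℤ) : P := w ^ a * W ^ b * z ^ (-(a * b))

/-- Collection formula in a Heisenberg group whose central commutator `[w, W]` is `z ^ 2`. -/
lemma zpow_swap {w W z : P} (hw : Commute z w) (hW : Commute z W)
    (hc : w * W = z ^ (2 : ℤ) * (W * w)) (a b : ℤ) :
    W ^ b * w ^ a = w ^ a * W ^ b * z ^ (-(2 * (a * b))) := by
  have h1 : W * w * W⁻¹ = w * z ^ (-2 : ℤ) := by
    rw [((hw.zpow_left (-2)).eq).symm, mul_inv_eq_iff_eq_mul, mul_assoc, hc, ← mul_assoc,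
      ← zpow_add]
    simp
  have h2 : W * w ^ a * W⁻¹ = w ^ a * z ^ (-2 * a) := by
    rw [← conj_zpow, h1, (hw.zpow_left (-2)).symm.mul_zpow, ← zpow_mul]
  have h3 : (w ^ a)⁻¹ * W * w ^ a = W * z ^ (-2 * a) := by
    have h4 : W * w ^ a = w ^ a * (z ^ (-2 * a) * W) := by
      rw [← mul_assoc, ← h2, inv_mul_cancel_right]
    rw [mul_assoc, h4, inv_mul_cancel_left, (hW.zpow_left _).eq]
  have h5 : (w ^ a)⁻¹ * W ^ b * w ^ a = W ^ b * z ^ (-(2 * (a * b))) := by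
    have := conj_zpow (a := (w ^ a)⁻¹) (b := W) (i := b)
    rw [inv_inv] at this
    rw [← this, h3, (hW.zpow_left _).symm.mul_zpow, ← zpow_mul]
    congr 2
    ring
  rw [mul_assoc, ← h5]
  group

lemma trans_mul {w W z : P} (hw : Commute z w) (hW : Commute z W)
    (hc : w * W = z ^ (2 : ℤ) * (W * w)) (a b a' b' : ℤ) :
    trans w W z a b * trans w W z a' b' =
      trans w W z (a + a') (b + b') * z ^ (a * b' - b * a') := by
  have h := zpow_swap hw hW hc a' b
  have h1 : ∀ m n : ℤ, z ^ m * w ^ n = w ^ n * z ^ m := fun m n => (hw.zpow_zpow m n).eq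
  have h2 : ∀ m n : ℤ, z ^ m * W ^ n = W ^ n * z ^ m := fun m n => (hW.zpow_zpow m n).eq
  calc trans w W z a b * trans w W z a' b'
      = w ^ a * W ^ b * (z ^ (-(a * b)) * w ^ a') * W ^ b' * z ^ (-(a' * b')) := by
        simp only [trans, mul_assoc]
    _ = w ^ a * (W ^ b * w ^ a') * (z ^ (-(a * b)) * W ^ b') * z ^ (-(a' * b')) := by
        rw [h1]; simp only [mul_assoc]
    _ = w ^ a * w ^ a' * W ^ b * (z ^ (-(2 * (a' * b))) * W ^ b') * z ^ (-(a * b))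
          * z ^ (-(a' * b')) := by
        rw [h2, h]; simp only [mul_assoc]
    _ = w ^ a * w ^ a' * (W ^ b * W ^ b') * (z ^ (-(2 * (a' * b))) * z ^ (-(a * b))
          * z ^ (-(a' * b'))) := by
        rw [h2]; simp only [mul_assoc]
    _ = _ := by
        simp only [← zpow_add, trans, mul_assoc]
        congr 3
        ring

/-- Conjugation by `x` turns translations by a quarter turn, hence conjugation by `x ^ n` is
multiplication by `i ^ n`. -/
lemma rot_trans {x w W z : P} (hx : Commute z x) (hw : Commute z w) (hW : Commute z W)
    (hc : w * W = z ^ (2 : ℤ) * (W * w)) (h1 : x * w * x⁻¹ = W) (h2 : x * W * x⁻¹ = w⁻¹)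
    (n a b : ℤ) :
    x ^ n * trans w W z a b =
      trans w W z (co n * a - si n * b) (si n * a + co n * b) * x ^ n := by
  have step : ∀ a b : ℤ, x * trans w W z a b = trans w W z (-b) a * x := by
    intro a b
    have h3 : x * w ^ a = W ^ a * x := by
      rw [← h1, conj_zpow]; group
    have h4 : x * W ^ b = w ^ (-b) * x := by
      rw [zpow_neg, ← inv_zpow, ← h2, conj_zpow]; group
    have h5 := zpow_swap hw hW hc (-b) a
    calc x * trans w W z a b = x * w ^ a * W ^ b * z ^ (-(a * b)) := by
          simp only [trans, mul_assoc]
      _ = W ^ a * (x * W ^ b) * z ^ (-(a * b)) := by rw [h3]; simp only [mul_assoc]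
      _ = W ^ a * w ^ (-b) * (x * z ^ (-(a * b))) := by rw [h4]; simp only [mul_assoc]
      _ = w ^ (-b) * W ^ a * (z ^ (-(2 * (-b * a))) * z ^ (-(a * b))) * x := by
          rw [h5, ← (hx.zpow_left _).eq]; simp only [mul_assoc]
      _ = _ := by
          rw [← zpow_add, trans]
          congr 3
          ring
  induction n using Int.induction_on generalizing a b with
  | zero => simp
  | succ n ih =>
    obtain ⟨h3, h4, -⟩ := co_si_add n 1
    have h5 : co 1 = 0 := rfl
    have h6 : si 1 = 1 := rfl
    rw [zpow_add_one, mul_assoc, step, ← mul_assoc, ih, mul_assoc, h3, h4, h5, h6]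
    congr 2 <;> ring
  | pred n ih =>
    obtain ⟨h3, h4, -⟩ := co_si_add (-(n : ℤ)) (-1)
    have h5 : co (-1) = 0 := rfl
    have h6 : si (-1) = -1 := rfl
    have h7 : x⁻¹ * trans w W z a b = trans w W z b (-a) * x⁻¹ := by
      have := step b (-a)
      rw [neg_neg] at this
      rw [inv_mul_eq_iff_eq_mul, ← mul_assoc, this, mul_inv_cancel_right]
    rw [zpow_sub_one, mul_assoc, h7, ← mul_assoc, ih, mul_assoc,
      show (-(n : ℤ) - 1) = -(n : ℤ) + -1 from sub_eq_add_neg _ _, h3, h4, h5, h6]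
    congr 2 <;> ring

/-- The homomorphism from `Gam e` determined by the images `x` of the quarter turn `(0, 1)` and
`w`, `W` of the translations `(1, 0)` and `(i, 0)`. -/
def lift {x w W : P} (hw : Commute (x ^ (8 * e)) w) (hW : Commute (x ^ (8 * e)) W)
    (hc : w * W = (x ^ (8 * e)) ^ (2 : ℤ) * (W * w))
    (h1 : x * w * x⁻¹ = W) (h2 : x * W * x⁻¹ = w⁻¹) : Gam e →* P :=
  MonoidHom.mk' (fun g => trans w W (x ^ (8 * e)) g.x g.y * x ^ g.r) (by
    intro g k
    have hx : Commute (x ^ (8 * e)) x := (Commute.refl x).zpow_left _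
    have h3 := rot_trans hx hw hW hc h1 h2 g.r k.x k.y
    have h4 := trans_mul hw hW hc g.x g.y (co g.r * k.x - si g.r * k.y)
      (si g.r * k.x + co g.r * k.y)
    symm
    calc trans w W (x ^ (8 * e)) g.x g.y * x ^ g.r * (trans w W (x ^ (8 * e)) k.x k.y * x ^ k.r)
        = trans w W (x ^ (8 * e)) g.x g.y * (x ^ g.r * trans w W (x ^ (8 * e)) k.x k.y)
            * x ^ k.r := by simp only [mul_assoc]
      _ = trans w W (x ^ (8 * e)) (g * k).x (g * k).y * (x ^ (8 * e)) ^ (area g k)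
            * x ^ g.r * x ^ k.r := by
          rw [h3, ← mul_assoc, h4]
          rfl
      _ = _ := by
          rw [mul_assoc, mul_assoc, ← zpow_add, ← zpow_mul, ← zpow_add, mul_r]
          congr 2
          ring)

lemma lift_apply {x w W : P} (hw : Commute (x ^ (8 * e)) w) (hW : Commute (x ^ (8 * e)) W)
    (hc : w * W = (x ^ (8 * e)) ^ (2 : ℤ) * (W * w))
    (h1 : x * w * x⁻¹ = W) (h2 : x * W * x⁻¹ = w⁻¹) (g : Gam e) :
    lift hw hW hc h1 h2 g = trans w W (x ^ (8 * e)) g.x g.y * x ^ g.r := rfl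

/-- The relations of `Gam e` for `x`, `w = y K x⁻¹` and `W = x w x⁻¹`, from those of a
`(4, 4, 2)` triangle group extended by central elements `K` and `q`. -/
lemma relations {x y K q : P} (hxK : Commute x K) (hyK : Commute y K) (hxq : Commute x q)
    (hyq : Commute y q) (hx : x * x * x * x = q * K * K) (hy : y * y * y * y = q * K * K)
    (hxy : x * y * x * y = q) :
    x * (x * (y * K * x⁻¹) * x⁻¹) * x⁻¹ = (y * K * x⁻¹)⁻¹ ∧
    (y * K * x⁻¹) * (x * (y * K * x⁻¹) * x⁻¹) =
      K * K * K * K * ((x * (y * K * x⁻¹) * x⁻¹) * (y * K * x⁻¹)) := by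
  have hKq : Commute q K := by
    rw [← hxy]
    exact ((hxK.mul_left hyK).mul_left hxK).mul_left hyK
  have hk : Commute y (q * K * K) := (hyq.mul_right hyK).mul_right hyK
  have hx3 : x⁻¹ * x⁻¹ * x⁻¹ = x * (q * K * K)⁻¹ := by rw [← hx]; group
  have hyy : (q * K * K) * (y⁻¹ * y⁻¹) = y * y := by rw [← hy]; simp [mul_assoc]
  have hxy2 : x * y = q * (y⁻¹ * x⁻¹) := by rw [← hxy]; group
  have hkx : Commute x (q * K * K) := (hxq.mul_right hxK).mul_right hxK
  have hqk : K * K * q * (q * K * K)⁻¹ = 1 := by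
    rw [((hKq.mul_right hKq).symm).eq, ← mul_assoc, mul_inv_cancel]
  constructor
  · rw [eq_inv_iff_mul_eq_one]
    calc x * (x * (y * K * x⁻¹) * x⁻¹) * x⁻¹ * (y * K * x⁻¹)
        = x * x * (y * K) * (x⁻¹ * x⁻¹ * x⁻¹) * (y * K) * x⁻¹ := by simp only [mul_assoc]
      _ = x * (x * (y * K) * x * ((q * K * K)⁻¹ * (y * K))) * x⁻¹ := by
          rw [hx3]; simp only [mul_assoc]
      _ = x * (x * y * x * y * K * K * (q * K * K)⁻¹) * x⁻¹ := by
          rw [((hk.mul_left ((hKq.symm.mul_right rfl).mul_right rfl)).inv_right.eq).symm,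
            hyK.eq, ← mul_assoc x K y, hxK.eq]
          simp only [mul_assoc, hyK.eq, hyK.left_comm, hxK.left_comm]
      _ = 1 := by rw [hxy]; group
  · calc y * K * x⁻¹ * (x * (y * K * x⁻¹) * x⁻¹)
        = K * K * (y * y) * (x⁻¹ * x⁻¹) := by
          rw [hyK.eq]
          simp only [mul_assoc, inv_mul_cancel_left, hyK.left_comm]
      _ = K * K * K * K * (q * y⁻¹ * y⁻¹ * (x⁻¹ * x⁻¹)) := by
          rw [← hyy, hKq.eq]
          simp only [mul_assoc, hKq.left_comm]
      _ = K * K * K * K * (y⁻¹ * (x * y) * x⁻¹) := by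
          rw [hxy2]
          simp only [mul_assoc, hyq.inv_left.left_comm]
      _ = K * K * K * K * (K * K * (q * (y⁻¹ * x⁻¹) * (x⁻¹ * x⁻¹) * y * x⁻¹)) := by
          have hc1 := hkx.inv_right
          have hc2 := hk.inv_right.inv_left
          calc K * K * K * K * (y⁻¹ * (x * y) * x⁻¹)
              = K * K * K * K * (K * K * q * (q * K * K)⁻¹ * (y⁻¹ * (x * (y * x⁻¹)))) := by
                rw [hqk, one_mul]; simp only [mul_assoc]
            _ = K * K * K * K * (K * K * (q * (y⁻¹ * (x * (q * K * K)⁻¹ * (y * x⁻¹))))) := by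
                rw [mul_assoc x, hc1.left_comm, hc2.left_comm]
                simp only [mul_assoc]
            _ = _ := by
                rw [← hx3]; simp only [mul_assoc]
      _ = K * K * K * K * (K * K * (x * y * (x⁻¹ * x⁻¹) * y * x⁻¹)) := by
          rw [hxy2]
      _ = _ := by
          rw [hyK.eq]
          simp only [mul_assoc, hxK.left_comm, hxK.inv_left.left_comm, hyK.left_comm]

end Presentation

/-! ### The presented groups are `Gam 1` and `Gam (-1)` -/

section Isomorphism

variable {P : Type*} [Group P]

/-- The homomorphism from `Gam e` sending `(0, 1)` to `x` and `(1, 1 - 4 e)` to `y`, where `x` and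
`y` satisfy the relations of `Gam.relations` with `K = x ^ (4 e)`, an element that commutes
with `y`. The translations `1` and `i` go to `w = y K x⁻¹` and `W = x w x⁻¹`. -/
def toP {x y q : P} (hyK : Commute y (x ^ (4 * e))) (hxq : Commute x q) (hyq : Commute y q)
    (hx : x * x * x * x = q * x ^ (4 * e) * x ^ (4 * e))
    (hy : y * y * y * y = q * x ^ (4 * e) * x ^ (4 * e)) (hxy : x * y * x * y = q) : Gam e →* P :=
  lift (e := e) (x := x) (w := y * x ^ (4 * e) * x⁻¹)
    (W := x * (y * x ^ (4 * e) * x⁻¹) * x⁻¹)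
    (by
      rw [show 8 * e = 4 * e + 4 * e by ring, zpow_add]
      have h1 : Commute (x ^ (4 * e)) (y * x ^ (4 * e) * x⁻¹) :=
        (hyK.symm.mul_right (Commute.refl _)).mul_right ((Commute.refl x).zpow_left _).inv_right
      exact h1.mul_left h1)
    (by
      rw [show 8 * e = 4 * e + 4 * e by ring, zpow_add]
      have h1 : Commute (x ^ (4 * e)) (y * x ^ (4 * e) * x⁻¹) :=
        (hyK.symm.mul_right (Commute.refl _)).mul_right ((Commute.refl x).zpow_left _).inv_right
      have h2 : Commute (x ^ (4 * e)) x := (Commute.refl x).zpow_left _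
      have h3 := (h2.mul_right h1).mul_right h2.inv_right
      exact h3.mul_left h3)
    (by
      rw [(relations ((Commute.refl x).zpow_right (4 * e)) hyK hxq hyq hx hy hxy).2]
      congr 1
      rw [← zpow_add, ← zpow_add, ← zpow_add, ← zpow_mul]
      congr 1
      ring)
    rfl
    (relations ((Commute.refl x).zpow_right (4 * e)) hyK hxq hyq hx hy hxy).1

/-- A group generated by such a pair `x`, `y` (in the sense that an endomorphism fixing both is the
identity) and mapping to `Gam e` compatibly is isomorphic to `Gam e`. -/
lemma exists_equiv {x y q : P} (hyK : Commute y (x ^ (4 * e))) (hxq : Commute x q)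
    (hyq : Commute y q) (hx : x * x * x * x = q * x ^ (4 * e) * x ^ (4 * e))
    (hy : y * y * y * y = q * x ^ (4 * e) * x ^ (4 * e)) (hxy : x * y * x * y = q)
    (hgen : ∀ f : P →* P, f x = x → f y = y → f = MonoidHom.id P)
    (φ : P →* Gam e) (hφx : φ x = ⟨0, 0, 1⟩) (hφy : φ y = ⟨1, 0, 1 - 4 * e⟩) :
    Nonempty (P ≃* Gam e) := by
  refine ⟨φ.toMulEquiv (toP hyK hxq hyq hx hy hxy) ?_ ?_⟩
  · apply hgen
    · simp [hφx, toP, lift_apply, trans]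
    · simp only [MonoidHom.comp_apply, hφy, toP, lift_apply, trans]
      rw [sub_eq_add_neg, zpow_add, zpow_neg]
      simp only [zpow_one, zpow_zero, mul_zero, mul_one, mul_assoc]
      simp
  · ext1 g
    have hw : φ (y * x ^ (4 * e) * x⁻¹) = ⟨1, 0, 0⟩ := by
      rw [map_mul, map_mul, map_inv, map_zpow, hφx, hφy, rot_zpow, ← zpow_neg_one, rot_zpow]
      ext <;> simp [area]
    have hW : φ (x * (y * x ^ (4 * e) * x⁻¹) * x⁻¹) = ⟨0, 1, 0⟩ := by
      have h1 : co 1 = 0 := rfl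
      have h2 : si 1 = 1 := rfl
      rw [map_mul, map_mul, hw, map_inv, hφx, ← zpow_neg_one, rot_zpow]
      ext <;> simp [area, h1, h2]
    rw [MonoidHom.comp_apply, toP, lift_apply, trans, map_mul, map_mul, map_mul, map_zpow, map_zpow,
      map_zpow, map_zpow, map_zpow, hw, hW, hφx, trx_zpow, try_zpow, rot_zpow, rot_zpow, rot_zpow]
    have h8 : co (-(g.x * g.y) * (8 * e * 1)) = 1 := by
      have := co_add8 0 e (-(g.x * g.y))
      refine Eq.trans (congrArg co ?_) (this.trans co_zero)
      ring
    have h9 : si (-(g.x * g.y) * (8 * e * 1)) = 0 := by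
      have := si_add8 0 e (-(g.x * g.y))
      refine Eq.trans (congrArg si ?_) (this.trans si_zero)
      ring
    ext <;> simp only [mul_x, mul_y, mul_r, area, h8, h9] <;> simp
    ring

end Isomorphism

end Gam

open Wilkes in
/-- The first group is `Gam 1`: here `x = a` and `y = b`, so that `x ^ 4 = h⁻¹` and
`(x y) ^ 2 = c ^ (-2) = h`. -/
lemma exists_equivM : Nonempty (PresentedGroup relsM ≃* Gam 1) := by
  set A : PresentedGroup relsM := PresentedGroup.mk _ a
  set B : PresentedGroup relsM := PresentedGroup.mk _ b
  set C : PresentedGroup relsM := PresentedGroup.mk _ c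
  set H : PresentedGroup relsM := PresentedGroup.mk _ h
  have rel : ∀ r ∈ relsM, PresentedGroup.mk relsM r = 1 := fun r hr =>
    PresentedGroup.one_of_mem hr
  have r1 : H * A * H⁻¹ * A⁻¹ = 1 := rel (h * a * h⁻¹ * a⁻¹) (by simp [relsM])
  have r2 : H * B * H⁻¹ * B⁻¹ = 1 := rel (h * b * h⁻¹ * b⁻¹) (by simp [relsM])
  have r4 : A ^ 4 * H = 1 := rel (a ^ 4 * h) (by simp [relsM])
  have r5 : B ^ 4 * H = 1 := rel (b ^ 4 * h) (by simp [relsM])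
  have r6 : C ^ 2 * H = 1 := rel (c ^ 2 * h) (by simp [relsM])
  have r7 : A * B * C = 1 := rel (a * b * c) (by simp [relsM])
  have cA : Commute A H := (commutatorElement_eq_one_iff_commute.1 r1).symm
  have cB : Commute B H := (commutatorElement_eq_one_iff_commute.1 r2).symm
  have hK : A ^ (4 * 1 : ℤ) = H⁻¹ := eq_inv_of_mul_eq_one_left (by exact_mod_cast r4)
  have hCi : C = (A * B)⁻¹ := eq_inv_of_mul_eq_one_right r7
  let v : Fin 4 → Gam 1 := ![⟨0, 0, 1⟩, ⟨1, 0, -3⟩, ⟨0, 1, 2⟩, ⟨0, 0, -4⟩]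
  have hv : ∀ r ∈ relsM, FreeGroup.lift v r = 1 := by
    simp only [relsM, Set.mem_insert_iff, Set.mem_singleton_iff]
    rintro r (rfl | rfl | rfl | rfl | rfl | rfl | rfl) <;>
    simp only [map_mul, map_inv, a, b, c, h, FreeGroup.lift_apply_of, pow_succ,
      pow_zero, one_mul, v, Matrix.cons_val] <;>
    ext <;> rfl
  refine Gam.exists_equiv (e := 1) (x := A) (y := B) (q := H) (hK ▸ cB.inv_right) cA cB
    ?_ ?_ ?_ ?_ (PresentedGroup.toGroup hv) ?_ ?_
  · rw [hK, mul_inv_cancel, one_mul, ← hK]; group; rfl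
  · rw [hK, mul_inv_cancel, one_mul, ← eq_inv_of_mul_eq_one_left r5]; group; rfl
  · have h1 : A * B = C⁻¹ := eq_inv_of_mul_eq_one_left r7
    rw [mul_assoc, h1, ← inv_eq_of_mul_eq_one_right r6]
    group
  · intro f hfA hfB
    ext i
    fin_cases i
    · exact hfA
    · exact hfB
    · change f C = C
      rw [hCi, map_inv, map_mul, hfA, hfB]
    · change f H = H
      rw [← inv_inv H, ← hK, map_inv, map_zpow, hfA]
  · rfl
  · rfl

open Wilkes in
/-- The second group is `Gam (-1)`: here `x = a h` and `y = b h`, so that `x ^ 4 = h`, and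
`(x y) ^ 2 = (a b) ^ 2 h ^ 4 = h ^ 3` since `a b = h⁻¹ c⁻¹`. -/
lemma exists_equivN : Nonempty (PresentedGroup relsN ≃* Gam (-1)) := by
  set A : PresentedGroup relsN := PresentedGroup.mk _ a
  set B : PresentedGroup relsN := PresentedGroup.mk _ b
  set C : PresentedGroup relsN := PresentedGroup.mk _ c
  set H : PresentedGroup relsN := PresentedGroup.mk _ h
  have rel : ∀ r ∈ relsN, PresentedGroup.mk relsN r = 1 := fun r hr =>
    PresentedGroup.one_of_mem hr
  have r1 : H * A * H⁻¹ * A⁻¹ = 1 := rel (h * a * h⁻¹ * a⁻¹) (by simp [relsN])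
  have r2 : H * B * H⁻¹ * B⁻¹ = 1 := rel (h * b * h⁻¹ * b⁻¹) (by simp [relsN])
  have r4 : A ^ 4 * H ^ 3 = 1 := rel (a ^ 4 * h ^ 3) (by simp [relsN])
  have r5 : B ^ 4 * H ^ 3 = 1 := rel (b ^ 4 * h ^ 3) (by simp [relsN])
  have r6 : C ^ 2 * H = 1 := rel (c ^ 2 * h) (by simp [relsN])
  have r7 : A * B * C * H = 1 := rel (a * b * c * h) (by simp [relsN])
  have cA : Commute A H := (commutatorElement_eq_one_iff_commute.1 r1).symm
  have cB : Commute B H := (commutatorElement_eq_one_iff_commute.1 r2).symm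
  have hA4 : (A * H) ^ 4 = H := by
    rw [cA.mul_pow, eq_inv_of_mul_eq_one_left r4]; group
  have hB4 : (B * H) ^ 4 = H := by
    rw [cB.mul_pow, eq_inv_of_mul_eq_one_left r5]; group
  have hK : (A * H) ^ (4 * -1 : ℤ) = H⁻¹ := by
    rw [mul_neg_one, zpow_neg, inv_inj]; exact_mod_cast hA4
  have hCi : C = (A * B)⁻¹ * H⁻¹ := by
    rw [eq_inv_mul_iff_mul_eq]
    exact eq_inv_of_mul_eq_one_left r7
  let v : Fin 4 → Gam (-1) := ![⟨0, 0, -3⟩, ⟨1, 0, 1⟩, ⟨0, 1, -2⟩, ⟨0, 0, 4⟩]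
  have hv : ∀ r ∈ relsN, FreeGroup.lift v r = 1 := by
    simp only [relsN, Set.mem_insert_iff, Set.mem_singleton_iff]
    rintro r (rfl | rfl | rfl | rfl | rfl | rfl | rfl) <;>
    simp only [map_mul, map_inv, a, b, c, h, FreeGroup.lift_apply_of, pow_succ,
      pow_zero, one_mul, v, Matrix.cons_val] <;>
    ext <;> rfl
  refine Gam.exists_equiv (e := -1) (x := A * H) (y := B * H) (q := H ^ 3)
    (hK ▸ (cB.mul_left (Commute.refl H)).inv_right) ((cA.mul_left (Commute.refl H)).pow_right 3)
    ((cB.mul_left (Commute.refl H)).pow_right 3)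
    ?_ ?_ ?_ ?_ (PresentedGroup.toGroup hv) ?_ ?_
  · rw [hK, show A * H * (A * H) * (A * H) * (A * H) = (A * H) ^ 4 by simp [pow_succ], hA4]
    group
  · rw [hK, show B * H * (B * H) * (B * H) * (B * H) = (B * H) ^ 4 by simp [pow_succ], hB4]
    group
  · have h1 : A * B = H⁻¹ * C⁻¹ := by
      rw [← mul_inv_rev, eq_inv_iff_mul_eq_one, ← mul_assoc, r7]
    have h2 : C⁻¹ * C⁻¹ = H := by
      rw [← inv_eq_of_mul_eq_one_right r6]; group
    have h3 : A * B * (A * B) = H⁻¹ := by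
      have h4 : Commute H⁻¹ (A * B) := (cA.mul_left cB).symm.inv_left
      calc A * B * (A * B) = H⁻¹ * (A * B) * C⁻¹ := by
            rw [h4.eq, mul_assoc (A * B) H⁻¹, ← h1]
        _ = H⁻¹ * H⁻¹ * (C⁻¹ * C⁻¹) := by rw [h1]; simp only [mul_assoc]
        _ = H⁻¹ := by rw [h2, inv_mul_cancel_right]
    calc A * H * (B * H) * (A * H) * (B * H) = A * B * (A * B) * (H * H * H * H) := by
          simp only [mul_assoc, cA.symm.left_comm, cB.symm.left_comm]
      _ = H ^ 3 := by rw [h3]; simp [pow_succ, mul_assoc]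
  · intro f hfA hfB
    have hfH : f H = H := by rw [← hA4, map_pow, hfA]
    rw [map_mul, hfH, mul_left_inj] at hfA hfB
    ext i
    fin_cases i
    · exact hfA
    · exact hfB
    · change f C = C
      rw [hCi, map_mul, map_inv, map_mul, map_inv, hfA, hfB, hfH]
    · exact hfH
  · rfl
  · rfl

end Nil

open Wilkes in
/-- Wilkes' example: the two presented Seifert-fibred groups have the
same `FIA`: for every `n > 0`, every index-`n` subgroup of one has an index-`n`
subgroup of the other with isomorphic abelianization, and conversely. -/
theorem wilkes_fia_eq :
    (∀ n : ℕ, 0 < n → ∀ K : Subgroup (PresentedGroup relsM), K.index = n →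
      ∃ L : Subgroup (PresentedGroup relsN), L.index = n ∧
        Nonempty (Abelianization K ≃* Abelianization L)) ∧
    (∀ n : ℕ, 0 < n → ∀ L : Subgroup (PresentedGroup relsN), L.index = n →
      ∃ K : Subgroup (PresentedGroup relsM), K.index = n ∧
        Nonempty (Abelianization L ≃* Abelianization K)) := by
  obtain ⟨eM⟩ := Nil.exists_equivM
  obtain ⟨eN⟩ := Nil.exists_equivN
  constructor
  · rintro n - K rfl
    obtain ⟨L, hL, ⟨f⟩⟩ := Nil.Gam.exists_partner (d := -1) rfl (K.map eM.toMonoidHom)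
    exact ⟨L.map eN.symm.toMonoidHom,
      (Subgroup.index_map_equiv L eN.symm).trans (hL.trans (Subgroup.index_map_equiv K eM)),
      ⟨((eM.subgroupMap K).abelianizationCongr.trans f).trans
        (eN.symm.subgroupMap L).abelianizationCongr⟩⟩
  · rintro n - L rfl
    obtain ⟨K, hK, ⟨f⟩⟩ := Nil.Gam.exists_partner (d := 1) (by norm_num) (L.map eN.toMonoidHom)
    exact ⟨K.map eM.symm.toMonoidHom,
      (Subgroup.index_map_equiv K eM.symm).trans (hK.trans (Subgroup.index_map_equiv L eN)),
      ⟨((eN.subgroupMap L).abelianizationCongr.trans f).trans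
        (eM.symm.subgroupMap K).abelianizationCongr⟩⟩

end ProfinitePaper
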